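/- arXiv:2604.21810 — 6 statements merged into one kernel-verified Lean document; each statement's English description precedes it below -/
import Mathlib

section
/- Let n, k₁, k₂ be positive integers with n ≥ k₁ + k₂ − 1. The linear map from ℝⁿ to ℝ^{n−k₁+1} × ℝ^{n−k₂+1} sending u to the pair of valid convolutions (u ⊛ b_{k₁}, u ⊛ b_{k₂}) is injective if and only if gcd(k₁, k₂) = 1. -/
/-- Valid convolution of `u : ℝⁿ` with the box of size `k`:
`(u ⊛ b_k)(t) = ∑_{s=0}^{k-1} u(t+s)` for `t = 0, …, n-k`. -/
noncomputable def validConv (n k : ℕ) (u : Fin n → ℝ) (t : Fin (n - k + 1)) : ℝ :=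
  ∑ s ∈ Finset.range k, if h : (t : ℕ) + s < n then u ⟨(t : ℕ) + s, h⟩ else 0

theorem vc_telescope (n k : ℕ) (hk : 0 < k) (hkn : k ≤ n) (u : Fin n → ℝ) (U : ℕ → ℝ)
    (hU : ∀ i : Fin n, u i = U (i + 1) - U i) (t : Fin (n - k + 1)) :
    validConv n k u t = U (t + k) - U t := by
  unfold validConv
  have h : ∀ s ∈ Finset.range k,
      (if h : (t : ℕ) + s < n then u ⟨(t : ℕ) + s, h⟩ else 0)
        = U (t + (s + 1)) - U (t + s) := by
    intro s hs
    have hs' := Finset.mem_range.1 hs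
    have ht := t.2
    have hlt : (t : ℕ) + s < n := by omega
    rw [dif_pos hlt, hU]
    simp [add_assoc]
  rw [Finset.sum_congr rfl h, Finset.sum_range_sub (fun s => U (t + s))]
  simp

theorem fine_wilf (n : ℕ) (f : ℕ → ℝ) : ∀ N p q : ℕ, p + q ≤ N → 0 < p → 0 < q →
    p + q ≤ n + 1 → (∀ t, t + p ≤ n → f (t + p) = f t) →
    (∀ t, t + q ≤ n → f (t + q) = f t) →
    ∀ t, t + Nat.gcd p q ≤ n → f (t + Nat.gcd p q) = f t := by
  intro N
  induction N with
  | zero => intro p q h hp; omega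
  | succ N ih =>
    have key : ∀ p q : ℕ, p < q → p + q ≤ n + 1 →
        (∀ t, t + p ≤ n → f (t + p) = f t) → (∀ t, t + q ≤ n → f (t + q) = f t) →
        ∀ t, t + (q - p) ≤ n → f (t + (q - p)) = f t := by
      intro p q hpq hn fp fq t ht
      by_cases h : t + q ≤ n
      · rw [← fq t h, ← fp (t + (q - p)) (by omega)]
        congr 1; omega
      · have h1 := fp (t - p) (by omega)
        have h2 := fq (t - p) (by omega)
        rw [show t - p + p = t by omega] at h1
        rw [show t - p + q = t + (q - p) by omega] at h2
        rw [h1, h2]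
    intro p q h hp hq hn fp fq
    rcases lt_trichotomy p q with hl | rfl | hl
    · have := ih p (q - p) (by omega) hp (by omega) (by omega) fp (key p q hl hn fp fq)
      rwa [Nat.gcd_sub_self_right hl.le] at this
    · simpa using fp
    · have := ih (p - q) q (by omega) (by omega) hq (by omega)
        (key q p hl (by omega) fq fp) fq
      rwa [Nat.gcd_sub_self_left hl.le] at this

theorem stmt0 (n k₁ k₂ : ℕ) (hn : 0 < n) (hk₁ : 0 < k₁) (hk₂ : 0 < k₂)
    (hsum : k₁ + k₂ - 1 ≤ n) :
    Function.Injective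
      (fun u : Fin n → ℝ => (validConv n k₁ u, validConv n k₂ u)) ↔
    Nat.gcd k₁ k₂ = 1 := by
  constructor
  · intro hinj
    by_contra hg
    have hgpos : 0 < Nat.gcd k₁ k₂ := Nat.gcd_pos_of_pos_left _ hk₁
    obtain ⟨a, ha⟩ := Nat.gcd_dvd_left k₁ k₂
    obtain ⟨b, hb⟩ := Nat.gcd_dvd_right k₁ k₂
    generalize Nat.gcd k₁ k₂ = g at *
    let U : ℕ → ℝ := fun t => if t % g = 1 then 1 else 0
    let u : Fin n → ℝ := fun i => U (i + 1) - U i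
    have e1 : validConv n k₁ u = validConv n k₁ 0 := by
      funext t
      rw [vc_telescope n k₁ hk₁ (by omega) u U (fun _ => rfl),
        vc_telescope n k₁ hk₁ (by omega) 0 (fun _ => 0) (by simp)]
      simp [U, ha]
    have e2 : validConv n k₂ u = validConv n k₂ 0 := by
      funext t
      rw [vc_telescope n k₂ hk₂ (by omega) u U (fun _ => rfl),
        vc_telescope n k₂ hk₂ (by omega) 0 (fun _ => 0) (by simp)]
      simp [U, hb]
    have h0 : u = 0 := hinj (Prod.ext e1 e2)
    have := congrFun h0 ⟨0, hn⟩
    have h1 : 1 % g = 1 := Nat.mod_eq_of_lt (by omega)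
    simp [u, U, h1] at this
  · intro hg u v huv
    have e1 : validConv n k₁ u = validConv n k₁ v := congrArg Prod.fst huv
    have e2 : validConv n k₂ u = validConv n k₂ v := congrArg Prod.snd huv
    let P : (Fin n → ℝ) → ℕ → ℝ := fun w m =>
      ∑ i ∈ Finset.range m, if h : i < n then w ⟨i, h⟩ else 0
    have hP : ∀ w : Fin n → ℝ, ∀ i : Fin n, w i = P w (i + 1) - P w i := by
      intro w i
      simp [P, Finset.sum_range_succ]
    have per : ∀ k, 0 < k → k ≤ n → validConv n k u = validConv n k v →
        ∀ t, t + k ≤ n → (P u (t + k) - P v (t + k)) = P u t - P v t := by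
      intro k hk hkn e t ht
      have := congrFun e ⟨t, by omega⟩
      rw [vc_telescope n k hk hkn u (P u) (hP u),
        vc_telescope n k hk hkn v (P v) (hP v)] at this
      simp only at this
      linarith
    have fw := fine_wilf n (fun t => P u t - P v t) (k₁ + k₂) k₁ k₂ le_rfl hk₁ hk₂ (by omega)
      (per k₁ hk₁ (by omega) e1) (per k₂ hk₂ (by omega) e2)
    rw [hg] at fw
    funext i
    have := fw i (by have := i.2; omega)
    rw [hP u i, hP v i]
    linarith
end

section
/- Let n, k₁, k₂ be positive integers with k₁, k₂ ≤ n and let r = gcd(k₁, k₂) satisfy r ≥ 2. Then every x ∈ ℝⁿ that is r-periodic (x(a+r) = x(a) whenever both a and a+r lie in {0,…,n−1}) and satisfies Σ_{a=0}^{r−1} x(a) = 0 lies in the kernel of the map u ↦ (u ⊛ b_{k₁}, u ⊛ b_{k₂}); moreover, there exists a nonzero x ∈ ℝⁿ with these two properties. -/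
theorem aux_window (r : ℕ) (g : ℕ → ℝ) (hp : ∀ m, g (m + r) = g m)
    (h0 : ∑ s ∈ Finset.range r, g s = 0) (t : ℕ) : ∑ s ∈ Finset.range r, g (t + s) = 0 := by
  induction t with
  | zero => simpa using h0
  | succ t ih =>
    have h1 := Finset.sum_range_succ (fun s => g (t + s)) r
    have h2 := Finset.sum_range_succ' (fun s => g (t + s)) r
    have h3 : ∑ s ∈ Finset.range r, g (t + 1 + s) = ∑ s ∈ Finset.range r, g (t + (s + 1)) :=
      Finset.sum_congr rfl fun s _ => by congr 1; omega
    have h4 := hp t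
    simp only [add_zero] at h1 h2
    linarith

theorem aux_mul (r : ℕ) (g : ℕ → ℝ) (hp : ∀ m, g (m + r) = g m)
    (h0 : ∑ s ∈ Finset.range r, g s = 0) (t q : ℕ) :
    ∑ s ∈ Finset.range (r * q), g (t + s) = 0 := by
  induction q with
  | zero => simp
  | succ q ih =>
    rw [Nat.mul_succ, Finset.sum_range_add, ih, zero_add]
    have := aux_window r g hp h0 (t + r * q)
    simpa [add_assoc] using this

theorem aux_conv (n k r : ℕ) (hr : 0 < r) (hrn : r ≤ n) (hk : k ≤ n) (hd : r ∣ k) (x : Fin n → ℝ)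
    (hx : ∀ (a : Fin n) (h : (a : ℕ) + r < n), x ⟨(a : ℕ) + r, h⟩ = x a)
    (h0 : (∑ a ∈ Finset.range r, if h : a < n then x ⟨a, h⟩ else 0) = 0) :
    validConv n k x = 0 := by
  have hlt : ∀ m, m % r < n := fun m => lt_of_lt_of_le (Nat.mod_lt m hr) hrn
  have key : ∀ m (h : m < n), x ⟨m, h⟩ = x ⟨m % r, hlt m⟩ := by
    intro m
    induction m using Nat.strong_induction_on with
    | _ m ih =>
      intro h
      by_cases hm : m < r
      · congr 2; exact (Nat.mod_eq_of_lt hm).symm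
      · have e : m - r + r = m := by omega
        have h1 := hx ⟨m - r, by omega⟩ (by simpa [e] using h)
        have h2 := ih (m - r) (by omega) (by omega)
        have e2 : (m - r) % r = m % r := (Nat.mod_eq_sub_mod (by omega)).symm
        simp only [e, e2] at h1 h2
        rw [h1, h2]
  obtain ⟨q, rfl⟩ := hd
  funext t
  have := aux_mul r (fun m => x ⟨m % r, hlt m⟩) (by intro m; simp) (by
    rw [← h0]
    refine Finset.sum_congr rfl fun s hs => ?_
    have hs : s < r := Finset.mem_range.mp hs
    rw [dif_pos (by omega), key s (by omega)]) t q
  simp only [validConv, Pi.zero_apply]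
  rw [← this]
  refine Finset.sum_congr rfl fun s hs => ?_
  have hs := Finset.mem_range.mp hs
  have ht := t.2
  have hl : (t : ℕ) + s < n := by omega
  rw [dif_pos hl, key _ hl]

theorem stmt1 (n k₁ k₂ r : ℕ) (hn : 0 < n) (hk₁ : 0 < k₁) (hk₂ : 0 < k₂)
    (h₁ : k₁ ≤ n) (h₂ : k₂ ≤ n) (hr : r = Nat.gcd k₁ k₂) (hr2 : 2 ≤ r) :
    (∀ x : Fin n → ℝ,
      (∀ (a : Fin n) (h : (a : ℕ) + r < n), x ⟨(a : ℕ) + r, h⟩ = x a) →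
      (∑ a ∈ Finset.range r, if h : a < n then x ⟨a, h⟩ else 0) = 0 →
      validConv n k₁ x = 0 ∧ validConv n k₂ x = 0) ∧
    (∃ x : Fin n → ℝ, x ≠ 0 ∧
      (∀ (a : Fin n) (h : (a : ℕ) + r < n), x ⟨(a : ℕ) + r, h⟩ = x a) ∧
      (∑ a ∈ Finset.range r, if h : a < n then x ⟨a, h⟩ else 0) = 0) := by
  have d1 : r ∣ k₁ := hr ▸ Nat.gcd_dvd_left _ _
  have d2 : r ∣ k₂ := hr ▸ Nat.gcd_dvd_right _ _
  have hrn : r ≤ n := (Nat.le_of_dvd hk₁ d1).trans h₁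
  refine ⟨fun x hx h0 => ⟨aux_conv n k₁ r (by omega) hrn h₁ d1 x hx h0,
    aux_conv n k₂ r (by omega) hrn h₂ d2 x hx h0⟩, ?_⟩
  refine ⟨fun a => (if (a : ℕ) % r = 0 then 1 else 0) - (if (a : ℕ) % r = 1 then 1 else 0),
    ?_, ?_, ?_⟩
  · intro h
    have := congrFun h ⟨0, hn⟩
    simp at this
  · intro a h
    simp
  · have : ∀ a ∈ Finset.range r, (if h : a < n then
        (((if a % r = 0 then 1 else 0) - (if a % r = 1 then 1 else 0) : ℝ)) else 0)
        = (if a = 0 then 1 else 0) - (if a = 1 then 1 else 0) := by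
      intro a ha
      have ha := Finset.mem_range.mp ha
      rw [dif_pos (by omega), Nat.mod_eq_of_lt ha]
    rw [Finset.sum_congr rfl this, Finset.sum_sub_distrib, Finset.sum_ite_eq', Finset.sum_ite_eq',
      if_pos (Finset.mem_range.mpr (by omega)), if_pos (Finset.mem_range.mpr (by omega)), sub_self]
end

section
/- Let u : ℤ² → ℝ and for a positive integer m define the m×m window sum y_m(a,b) = Σ_{s=0}^{m−1} Σ_{t=0}^{m−1} u(a+s, b+t). Then for every positive integer k and all (a,b) ∈ ℤ²: u(a,b) = y_k(a+1, b−k) + y_k(a−k, b+1) + y_{k+1}(a, b) + y_{k+1}(a−k, b−k) − y_{2k+1}(a−k, b−k). -/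
/-- The `m×m` window sum of a two-dimensional signal `u : ℤ² → ℝ` at position `(a,b)`:
`y_m(a,b) = ∑_{s=0}^{m-1} ∑_{t=0}^{m-1} u(a+s, b+t)`. -/
noncomputable def winSum (u : ℤ × ℤ → ℝ) (m : ℕ) (a b : ℤ) : ℝ :=
  ∑ s ∈ Finset.range m, ∑ t ∈ Finset.range m, u (a + s, b + t)

theorem aux_split (f : ℤ → ℝ) (k : ℕ) (a : ℤ) :
    ∑ s ∈ Finset.range (2 * k + 1), f (a - k + s) =
      ∑ s ∈ Finset.range k, f (a - k + s) + f a + ∑ s ∈ Finset.range k, f (a + 1 + s) := by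
  rw [show 2 * k + 1 = (k + 1) + k by ring, Finset.sum_range_add, Finset.sum_range_succ]
  congr 1
  · congr 2; ring
  · refine Finset.sum_congr rfl fun i _ => ?_
    congr 1; push_cast; ring

theorem aux_hi (f : ℤ → ℝ) (k : ℕ) (a : ℤ) :
    ∑ s ∈ Finset.range (k + 1), f (a + s) =
      f a + ∑ s ∈ Finset.range k, f (a + 1 + s) := by
  rw [Finset.sum_range_succ', add_comm]
  congr 1
  · simp
  · refine Finset.sum_congr rfl fun i _ => ?_
    congr 1; push_cast; ring

theorem aux_lo (f : ℤ → ℝ) (k : ℕ) (a : ℤ) :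
    ∑ s ∈ Finset.range (k + 1), f (a - k + s) =
      ∑ s ∈ Finset.range k, f (a - k + s) + f a := by
  rw [Finset.sum_range_succ]
  congr 2; ring

theorem stmt4 (u : ℤ × ℤ → ℝ) (k : ℕ) (hk : 0 < k) (a b : ℤ) :
    u (a, b) =
      winSum u k (a + 1) (b - k) + winSum u k (a - k) (b + 1) +
        winSum u (k + 1) a b + winSum u (k + 1) (a - k) (b - k) -
        winSum u (2 * k + 1) (a - k) (b - k) := by
  unfold winSum
  rw [aux_split (fun x => ∑ t ∈ Finset.range (2 * k + 1), u (x, b - k + t)),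
    aux_hi (fun x => ∑ t ∈ Finset.range (k + 1), u (x, b + t)),
    aux_lo (fun x => ∑ t ∈ Finset.range (k + 1), u (x, b - k + t))]
  have h1 := fun x => aux_split (fun y => u (x, y)) k b
  have h2 := fun x => aux_hi (fun y => u (x, y)) k b
  have h3 := fun x => aux_lo (fun y => u (x, y)) k b
  simp only [h1, h2, h3, Finset.sum_add_distrib]
  ring
end

section
/- Let d be a positive integer and let k₁,…,k_{d+1} be pairwise coprime integers, each at least 2. Define f : [0,2π]^d → ℝ by f(ω₁,…,ω_d) = (Σ_{j=1}^{d+1} Π_{ℓ=1}^{d} f_{k_j}(ω_ℓ)²)^{1/2}. Then f is strictly positive on all of [0,2π]^d, and hence its minimum M over the compact cube [0,2π]^d satisfies M > 0. -/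
/-- The periodic sinc `f_k : [0,2π] → ℝ`, `f_k(ω) = sin(kω/2)/(k sin(ω/2))` on `(0,2π)`,
extended continuously by `f_k(0) = f_k(2π) = 1`. -/
noncomputable def psinc (k : ℕ) (ω : ℝ) : ℝ :=
  if ω = 0 ∨ ω = 2 * Real.pi then 1 else Real.sin (k * ω / 2) / (k * Real.sin (ω / 2))

/-- `f(ω₁,…,ω_d) = (∑_{j=1}^{s} ∏_{ℓ=1}^{d} f_{k_j}(ω_ℓ)²)^{1/2}`. -/
noncomputable def fmulti (d s : ℕ) (k : Fin s → ℕ) (ω : Fin d → ℝ) : ℝ :=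
  Real.sqrt (∑ j, ∏ ℓ, psinc (k j) (ω ℓ) ^ 2)

theorem psinc_zero {k : ℕ} {ω : ℝ} (hk : 2 ≤ k) (hω : ω ∈ Set.Icc 0 (2 * Real.pi))
    (h : psinc k ω = 0) : 0 < ω ∧ ω < 2 * Real.pi ∧ ∃ m : ℤ, (m : ℝ) * (2 * Real.pi) = k * ω := by
  unfold psinc at h
  split_ifs at h with h0
  · norm_num at h
  · push Not at h0
    have h1 : 0 < ω := lt_of_le_of_ne hω.1 (Ne.symm h0.1)
    have h2 : ω < 2 * Real.pi := lt_of_le_of_ne hω.2 h0.2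
    refine ⟨h1, h2, ?_⟩
    have hs : 0 < Real.sin (ω / 2) := Real.sin_pos_of_pos_of_lt_pi (by linarith) (by linarith)
    have hk' : (0 : ℝ) < k := by exact_mod_cast (by omega : 0 < k)
    rcases div_eq_zero_iff.1 h with h | h
    · obtain ⟨m, hm⟩ := Real.sin_eq_zero_iff.1 h
      exact ⟨m, by linarith⟩
    · exact absurd h (by positivity)

theorem psinc_no_common {k l : ℕ} {ω : ℝ} (hk : 2 ≤ k) (hl : 2 ≤ l) (hc : Nat.Coprime k l)
    (hω : ω ∈ Set.Icc 0 (2 * Real.pi)) (h : psinc k ω = 0) (h' : psinc l ω = 0) : False := by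
  obtain ⟨h1, h2, m, hm⟩ := psinc_zero hk hω h
  obtain ⟨_, _, n, hn⟩ := psinc_zero hl hω h'
  obtain ⟨a, b, hab⟩ := Nat.isCoprime_iff_coprime.2 hc
  have hab' : (a : ℝ) * k + b * l = 1 := by exact_mod_cast hab
  have key : ((a * m + b * n : ℤ) : ℝ) * (2 * Real.pi) = ω := by
    push_cast
    linear_combination a * hm + b * hn + ω * hab'
  have hp : (0 : ℝ) < 2 * Real.pi := by positivity
  generalize a * m + b * n = t at key
  have t0 : (0 : ℝ) < t := by
    by_contra hh
    nlinarith
  have t1 : (t : ℝ) < 1 := by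
    by_contra hh
    nlinarith
  have : 0 < t := by exact_mod_cast t0
  have : t < 1 := by exact_mod_cast t1
  omega

theorem psinc_sq {k : ℕ} {ω : ℝ} (hk : 2 ≤ k) (hω : ω ∈ Set.Icc 0 (2 * Real.pi)) :
    psinc k ω ^ 2 =
      ((Polynomial.Chebyshev.U ℝ ((k : ℤ) - 1)).eval (Real.cos (ω / 2)) / k) ^ 2 := by
  have hk' : (k : ℝ) ≠ 0 := by exact_mod_cast (by omega : k ≠ 0)
  unfold psinc
  split_ifs with h0
  · rcases h0 with h0 | h0
    · subst h0
      simp [hk']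
    · subst h0
      have : 2 * Real.pi / 2 = Real.pi := by ring
      rw [this, Real.cos_pi, Polynomial.Chebyshev.U_eval_neg_one]
      push_cast
      rw [sub_add_cancel, mul_div_assoc, div_self hk', mul_one]
      rcases Int.units_eq_one_or (Int.negOnePow ((k : ℤ) - 1)) with h | h <;> simp [h]
  · push Not at h0
    have h1 : 0 < ω := lt_of_le_of_ne hω.1 (Ne.symm h0.1)
    have h2 : ω < 2 * Real.pi := lt_of_le_of_ne hω.2 h0.2
    have hs : 0 < Real.sin (ω / 2) := Real.sin_pos_of_pos_of_lt_pi (by linarith) (by linarith)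
    have := Polynomial.Chebyshev.U_real_cos (ω / 2) ((k : ℤ) - 1)
    push_cast at this
    rw [sub_add_cancel, ← mul_div_assoc] at this
    rw [← this]
    congr 1
    field_simp

theorem stmt14 (d : ℕ) (hd : 0 < d) (k : Fin (d + 1) → ℕ) (hk2 : ∀ j, 2 ≤ k j)
    (hcop : ∀ i j, i ≠ j → Nat.Coprime (k i) (k j)) :
    (∀ ω : Fin d → ℝ, (∀ ℓ, ω ℓ ∈ Set.Icc 0 (2 * Real.pi)) → 0 < fmulti d (d + 1) k ω) ∧
    ∃ M : ℝ, 0 < M ∧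
      IsLeast (fmulti d (d + 1) k '' {ω | ∀ ℓ, ω ℓ ∈ Set.Icc 0 (2 * Real.pi)}) M := by
  have pos : ∀ ω : Fin d → ℝ, (∀ ℓ, ω ℓ ∈ Set.Icc 0 (2 * Real.pi)) →
      0 < fmulti d (d + 1) k ω := by
    intro ω hω
    unfold fmulti
    apply Real.sqrt_pos.2
    have hnn : ∀ j ∈ Finset.univ, 0 ≤ ∏ ℓ, psinc (k j) (ω ℓ) ^ 2 :=
      fun j _ => Finset.prod_nonneg fun ℓ _ => sq_nonneg _
    refine lt_of_le_of_ne (Finset.sum_nonneg hnn) fun h => ?_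
    have hz := (Finset.sum_eq_zero_iff_of_nonneg hnn).1 h.symm
    have hex : ∀ j, ∃ ℓ, psinc (k j) (ω ℓ) = 0 := by
      intro j
      obtain ⟨ℓ, _, hℓ⟩ := Finset.prod_eq_zero_iff.1 (hz j (Finset.mem_univ j))
      exact ⟨ℓ, pow_eq_zero_iff (two_ne_zero) |>.1 hℓ⟩
    choose g hg using hex
    obtain ⟨i, j, hij, he⟩ := Fintype.exists_ne_map_eq_of_card_lt g (by simp)
    exact psinc_no_common (hk2 i) (hk2 j) (hcop i j hij) (hω (g i)) (hg i) (he ▸ hg j)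
  refine ⟨pos, ?_⟩
  have hset : {ω : Fin d → ℝ | ∀ ℓ, ω ℓ ∈ Set.Icc 0 (2 * Real.pi)} =
      Set.univ.pi fun _ => Set.Icc 0 (2 * Real.pi) := by
    ext ω; simp only [Set.mem_setOf_eq, Set.mem_univ_pi]
  have hcomp : IsCompact {ω : Fin d → ℝ | ∀ ℓ, ω ℓ ∈ Set.Icc 0 (2 * Real.pi)} := by
    rw [hset]
    exact isCompact_univ_pi fun _ => isCompact_Icc
  have hne : {ω : Fin d → ℝ | ∀ ℓ, ω ℓ ∈ Set.Icc 0 (2 * Real.pi)}.Nonempty :=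
    ⟨fun _ => 0, fun _ => ⟨le_rfl, by positivity⟩⟩
  have hcont : ContinuousOn (fmulti d (d + 1) k)
      {ω : Fin d → ℝ | ∀ ℓ, ω ℓ ∈ Set.Icc 0 (2 * Real.pi)} := by
    have hc : Continuous fun ω : Fin d → ℝ => Real.sqrt (∑ j, ∏ ℓ,
        ((Polynomial.Chebyshev.U ℝ ((k j : ℤ) - 1)).eval (Real.cos (ω ℓ / 2)) / k j) ^ 2) := by
      fun_prop
    refine hc.continuousOn.congr fun ω hω => ?_
    unfold fmulti
    congr 1
    exact Finset.sum_congr rfl fun j _ => Finset.prod_congr rfl fun ℓ _ =>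
      psinc_sq (hk2 j) (hω ℓ)
  obtain ⟨x, hx, hmin⟩ := hcomp.exists_isMinOn hne hcont
  refine ⟨_, pos x hx, ⟨x, hx, rfl⟩, ?_⟩
  rintro _ ⟨y, hy, rfl⟩
  exact hmin hy
end

section
/- Let d be a positive integer and let k₁,…,k_{d+1} be pairwise coprime integers, each at least 2. For n ≥ max_j k_j let T_n be the stacked cyclic-convolution map T_n(u) = (u ⊛ b_{k₁}, …, u ⊛ b_{k_{d+1}}) on ℂ^{(ℤ/nℤ)^d}, and define f : [0,2π]^d → ℝ by f(ω₁,…,ω_d) = (Σ_{j=1}^{d+1} Π_{ℓ=1}^{d} f_{k_j}(ω_ℓ)²)^{1/2}. Then T_n*T_n is invertible for every such n, and lim_{n→∞} tr((T_n*T_n)^{−1}) / n^d = (2π)^{−d} ∫_{[0,2π]^d} f(ω₁,…,ω_d)^{−2} dω₁⋯dω_d. -/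
open scoped BigOperators

/-- The `d`-dimensional normalized box filter of size `k` on `[n]^d` (indices in `ℤ/nℤ`,
represented by `Fin n`): value `1/k^d` if every coordinate is in `{0,…,k-1}`, else `0`. -/
noncomputable def boxC (n k d : ℕ) : (Fin d → Fin n) → ℂ :=
  fun t => if ∀ ℓ, (t ℓ : ℕ) < k then 1 / (k : ℂ) ^ d else 0

/-- Cyclic convolution on `(ℤ/nℤ)^d`: `(u ⊛ b)(t) = ∑_s b(s) u(t - s)`, indices mod `n`. -/
noncomputable def cconv (n d : ℕ) (b u : (Fin d → Fin n) → ℂ) : (Fin d → Fin n) → ℂ :=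
  fun t => ∑ s : Fin d → Fin n, b s * u fun ℓ => t ℓ - s ℓ

/-- Discrete Fourier transform of `v` at the discrete frequency `ω = 2πm/n`, `m ∈ [n]^d`:
`v̄(ω) = ∑_{t ∈ [n]^d} v(t) e^{-i ∑_ℓ t_ℓ ω_ℓ}`. -/
noncomputable def dft (n d : ℕ) (v : (Fin d → Fin n) → ℂ) (m : Fin d → Fin n) : ℂ :=
  ∑ t : Fin d → Fin n, v t *
    Complex.exp (-Complex.I * ∑ ℓ, ((t ℓ : ℕ) : ℂ) * (2 * (Real.pi : ℂ) * ((m ℓ : ℕ) : ℂ) / (n : ℂ)))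

/-- one-dimensional symbol -/
noncomputable def symD (k : ℕ) (ω : ℝ) : ℂ :=
  (1 / (k : ℂ)) * ∑ t ∈ Finset.range k, Complex.exp (Complex.I * ((-ω : ℝ) : ℂ)) ^ t

lemma symD_continuous (k : ℕ) : Continuous (symD k) := by
  unfold symD; fun_prop

lemma symD_eq_zero (k : ℕ) (hk : 0 < k) (ω : ℝ) (h : symD k ω = 0) :
    Complex.exp (Complex.I * ((-ω : ℝ) : ℂ)) ^ k = 1 ∧
    Complex.exp (Complex.I * ((-ω : ℝ) : ℂ)) ≠ 1 := by
  have hk' : (k : ℂ) ≠ 0 := by exact_mod_cast hk.ne'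
  have h0 : ∑ t ∈ Finset.range k, Complex.exp (Complex.I * ((-ω : ℝ) : ℂ)) ^ t = 0 := by
    unfold symD at h
    rcases mul_eq_zero.1 h with h | h
    · exact absurd h (one_div_ne_zero hk')
    · exact h
  refine ⟨?_, ?_⟩
  · have := geom_sum_mul (Complex.exp (Complex.I * ((-ω : ℝ) : ℂ))) k
    rw [h0, zero_mul] at this
    exact (sub_eq_zero.1 this.symm)
  · intro h1
    rw [h1] at h0
    simp at h0
    omega

lemma psinc_sq_s17 (k : ℕ) (hk : 0 < k) (ω : ℝ) (h0 : 0 ≤ ω) (h1 : ω ≤ 2 * Real.pi) :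
    psinc k ω ^ 2 = ‖symD k ω‖ ^ 2 := by
  have hk' : (k : ℂ) ≠ 0 := by exact_mod_cast hk.ne'
  unfold psinc
  split_ifs with h
  · have : Complex.exp (Complex.I * ((-ω : ℝ) : ℂ)) = 1 := by
      rcases h with h | h
      · simp [h]
      · rw [Complex.exp_eq_one_iff]
        refine ⟨-1, ?_⟩
        rw [h]; push_cast; ring
    unfold symD
    rw [this]
    simp [hk']
  · push Not at h
    have hs : 0 < Real.sin (ω / 2) := by
      apply Real.sin_pos_of_pos_of_lt_pi
      · have := lt_of_le_of_ne h0 (Ne.symm h.1); linarith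
      · have := lt_of_le_of_ne h1 h.2; linarith
    have e1 : ‖Complex.exp (Complex.I * ((-ω : ℝ) : ℂ)) - 1‖ = 2 * Real.sin (ω / 2) := by
      rw [Complex.norm_exp_I_mul_ofReal_sub_one, neg_div, Real.sin_neg, Real.norm_eq_abs]
      rw [mul_neg, abs_neg, abs_of_pos (by positivity)]
    have e2 : ‖Complex.exp (Complex.I * ((-ω : ℝ) : ℂ)) ^ k - 1‖ = |2 * Real.sin (k * ω / 2)| := by
      have : Complex.exp (Complex.I * ((-ω : ℝ) : ℂ)) ^ k
          = Complex.exp (Complex.I * ((-(k * ω) : ℝ) : ℂ)) := by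
        rw [← Complex.exp_nat_mul]; congr 1; push_cast; ring
      rw [this, Complex.norm_exp_I_mul_ofReal_sub_one, neg_div, Real.sin_neg, Real.norm_eq_abs,
        mul_neg, abs_neg]
    have e3 := congrArg norm (geom_sum_mul (Complex.exp (Complex.I * ((-ω : ℝ) : ℂ))) k)
    rw [norm_mul, e1, e2] at e3
    have e4 : ‖symD k ω‖ = |Real.sin (k * ω / 2) / (k * Real.sin (ω / 2))| := by
      unfold symD
      rw [norm_mul, abs_div, abs_mul, abs_of_pos hs]
      rw [abs_mul, abs_two] at e3
      have hkr : (k : ℝ) ≠ 0 := by exact_mod_cast hk.ne'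
      simp only [norm_div, norm_one, Complex.norm_natCast, Nat.abs_cast]
      field_simp
      linarith
    rw [e4, sq_abs]

/-- the full symbol -/
noncomputable def symF (d : ℕ) (k : Fin (d + 1) → ℕ) (ω : Fin d → ℝ) : ℝ :=
  ∑ j, ∏ ℓ, ‖symD (k j) (ω ℓ)‖ ^ 2

lemma symF_continuous (d : ℕ) (k : Fin (d + 1) → ℕ) : Continuous (symF d k) := by
  unfold symF
  have := fun j => symD_continuous (k j)
  fun_prop

lemma symF_pos (d : ℕ) (k : Fin (d + 1) → ℕ) (hk2 : ∀ j, 2 ≤ k j)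
    (hcop : ∀ i j, i ≠ j → Nat.Coprime (k i) (k j)) (ω : Fin d → ℝ) : 0 < symF d k ω := by
  have hnn : ∀ j, 0 ≤ ∏ ℓ, ‖symD (k j) (ω ℓ)‖ ^ 2 := fun j =>
    Finset.prod_nonneg fun _ _ => by positivity
  refine lt_of_le_of_ne (Finset.sum_nonneg fun j _ => hnn j) ?_
  intro h
  have h' : ∀ j, ∃ ℓ, symD (k j) (ω ℓ) = 0 := by
    intro j
    have := (Finset.sum_eq_zero_iff_of_nonneg (fun j _ => hnn j)).1 h.symm j (Finset.mem_univ _)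
    obtain ⟨ℓ, _, hl⟩ := Finset.prod_eq_zero_iff.1 this
    exact ⟨ℓ, by simpa using hl⟩
  choose g hg using h'
  obtain ⟨i, j, hij, he⟩ := Fintype.exists_ne_map_eq_of_card_lt g (by simp)
  have a := symD_eq_zero (k i) (by have := hk2 i; omega) _ (hg i)
  have b := symD_eq_zero (k j) (by have := hk2 j; omega) _ (hg j)
  rw [← he] at b
  apply a.2
  have h1 := orderOf_dvd_of_pow_eq_one a.1
  have h2 := orderOf_dvd_of_pow_eq_one b.1
  have := Nat.eq_one_of_dvd_coprimes (hcop i j hij) h1 h2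
  exact orderOf_eq_one_iff.1 this

lemma fmulti_sq (d : ℕ) (k : Fin (d + 1) → ℕ) (hk2 : ∀ j, 2 ≤ k j) (ω : Fin d → ℝ)
    (hω : ω ∈ Set.univ.pi fun _ : Fin d => Set.Icc (0 : ℝ) (2 * Real.pi)) :
    fmulti d (d + 1) k ω ^ 2 = symF d k ω := by
  unfold fmulti symF
  rw [Real.sq_sqrt (Finset.sum_nonneg fun j _ => Finset.prod_nonneg fun _ _ => by positivity)]
  refine Finset.sum_congr rfl fun j _ => Finset.prod_congr rfl fun l _ => ?_
  have := hω l trivial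
  exact psinc_sq_s17 _ (by have := hk2 j; omega) _ this.1 this.2

open MeasureTheory Pointwise in
lemma riemann_unit (d : ℕ) (H : (Fin d → ℝ) → ℝ) (hH : Continuous H) :
    Filter.Tendsto (fun n : ℕ => (∑ m : Fin d → Fin n, H (fun l => (m l : ℕ) / (n : ℝ))) / (n : ℝ) ^ d)
      Filter.atTop (nhds (∫ x in Set.univ.pi fun _ : Fin d => Set.Ico (0 : ℝ) 1, H x)) := by
  set s : Set (Fin d → ℝ) := Set.univ.pi fun _ : Fin d => Set.Ico (0 : ℝ) 1 with hs
  have key := tendsto_tsum_div_pow_atTop_integral (F := H) (s := s) hH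
    ((Bornology.IsBounded.pi fun _ => Metric.isBounded_Ico 0 1))
    (MeasurableSet.univ_pi fun _ => measurableSet_Ico)
    (Convex.addHaar_frontier _ (convex_pi fun _ _ => convex_Ico 0 1))
  refine key.congr' ?_
  filter_upwards [Filter.eventually_gt_atTop 0] with n hn
  rw [Fintype.card_fin]
  congr 1
  have hn' : (0 : ℝ) < n := by exact_mod_cast hn
  have mem : ∀ m : Fin d → Fin n, (fun l => ((m l : ℕ) / (n : ℝ))) ∈
      s ∩ (n : ℝ)⁻¹ • (Submodule.span ℤ (Set.range (Pi.basisFun ℝ (Fin d))) : Set (Fin d → ℝ)) := by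
    intro m
    constructor
    · intro l _
      refine ⟨by positivity, ?_⟩
      rw [div_lt_one hn']
      exact_mod_cast (m l).2
    · refine ⟨fun l => ((m l : ℕ) : ℝ), ?_, ?_⟩
      · rw [SetLike.mem_coe, Module.Basis.mem_span_iff_repr_mem]
        intro l
        exact ⟨(m l : ℕ), by simp⟩
      · ext l
        simp [div_eq_inv_mul]
  let e : (Fin d → Fin n) → ↑(s ∩ (n : ℝ)⁻¹ • (Submodule.span ℤ (Set.range (Pi.basisFun ℝ (Fin d))) : Set (Fin d → ℝ))) :=
    fun m => ⟨_, mem m⟩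
  have he : Function.Bijective e := by
    constructor
    · intro m m' h
      have h := congrArg Subtype.val h
      ext l
      have hl := congrFun h l
      simp only [e] at hl
      rw [div_left_inj' hn'.ne'] at hl
      exact_mod_cast hl
    · rintro ⟨x, hx, y, hy, hxy⟩
      rw [SetLike.mem_coe, Module.Basis.mem_span_iff_repr_mem] at hy
      have hz : ∀ l, ∃ z : ℤ, (z : ℝ) = y l := by
        intro l
        obtain ⟨z, hz⟩ := hy l
        exact ⟨z, by simpa using hz⟩
      choose z hz using hz
      have hxl : ∀ l, x l = z l / n := by
        intro l
        rw [← hxy]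
        simp [hz, div_eq_inv_mul]
      have h0 : ∀ l, 0 ≤ z l := by
        intro l
        have := (hx l trivial).1
        rw [hxl] at this
        by_contra hc
        push Not at hc
        have hc' : (z l : ℝ) < 0 := by exact_mod_cast hc
        exact absurd this (not_le.2 (div_neg_of_neg_of_pos hc' hn'))
      have h1 : ∀ l, z l < n := by
        intro l
        have := (hx l trivial).2
        rw [hxl, div_lt_one hn'] at this
        exact_mod_cast this
      refine ⟨fun l => ⟨(z l).toNat, by have := h0 l; have := h1 l; omega⟩, ?_⟩
      apply Subtype.ext
      funext l
      simp only [e]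
      rw [hxl]
      congr 1
      exact_mod_cast Int.toNat_of_nonneg (h0 l)
  rw [← (Equiv.ofBijective e he).tsum_eq, tsum_fintype]
  rfl

open MeasureTheory Pointwise in
lemma riemann_2pi (d : ℕ) (H : (Fin d → ℝ) → ℝ) (hH : Continuous H) :
    Filter.Tendsto (fun n : ℕ => (∑ m : Fin d → Fin n,
        H (fun l => 2 * Real.pi * ((m l : ℕ) / (n : ℝ)))) / (n : ℝ) ^ d)
      Filter.atTop (nhds (((2 * Real.pi) ^ d)⁻¹ *
        ∫ x in Set.univ.pi fun _ : Fin d => Set.Icc (0 : ℝ) (2 * Real.pi), H x)) := by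
  have h := riemann_unit d (fun x => H ((2 * Real.pi) • x)) (by fun_prop)
  have hpi : (0 : ℝ) < 2 * Real.pi := by positivity
  have e : ∫ x in Set.univ.pi fun _ : Fin d => Set.Ico (0 : ℝ) 1, H ((2 * Real.pi) • x)
      = ((2 * Real.pi) ^ d)⁻¹ *
        ∫ x in Set.univ.pi fun _ : Fin d => Set.Icc (0 : ℝ) (2 * Real.pi), H x := by
    have e1 : (Set.univ.pi fun _ : Fin d => Set.Ico (0 : ℝ) 1) =ᵐ[volume]
        (Set.univ.pi fun _ : Fin d => Set.Icc (0 : ℝ) 1) :=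
      Measure.univ_pi_Ico_ae_eq_Icc (μ := fun _ : Fin d => (volume : Measure ℝ)) (f := fun _ => 0) (g := fun _ => 1) |>.trans (by rw [Set.pi_univ_Icc]; rfl)
    rw [setIntegral_congr_set e1, Measure.setIntegral_comp_smul_of_pos _ _ _ hpi]
    rw [Module.finrank_fin_fun, smul_eq_mul]
    congr 3
    ext x
    rw [Set.mem_smul_set_iff_inv_smul_mem₀ hpi.ne']
    simp only [Set.mem_pi, Set.mem_univ, true_imp_iff, Set.mem_Icc, Pi.smul_apply, smul_eq_mul]
    refine forall_congr' fun l => ?_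
    rw [inv_mul_le_iff₀ hpi, mul_one, mul_nonneg_iff_of_pos_left (inv_pos.2 hpi)]
  rw [e] at h
  exact h

/-- one-dimensional character -/
noncomputable def chi (n : ℕ) (m t : Fin n) : ℂ :=
  Complex.exp (Complex.I * ((2 * Real.pi * ((m : ℕ) / (n : ℝ)) * (t : ℕ) : ℝ) : ℂ))

lemma chi_sub (n : ℕ) (m t s : Fin n) : chi n m (t - s) =
    chi n m t * Complex.exp (Complex.I * ((-(2 * Real.pi * ((m : ℕ) / (n : ℝ))) : ℝ) : ℂ)) ^ (s : ℕ) := by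
  have hn : 0 < n := m.pos
  have hn' : (n : ℂ) ≠ 0 := by exact_mod_cast hn.ne'
  unfold chi
  rw [← Complex.exp_nat_mul, ← Complex.exp_add, Complex.exp_eq_exp_iff_exists_int]
  have h := Nat.div_add_mod (n - (s : ℕ) + (t : ℕ)) n
  rw [← Fin.val_sub] at h
  have hs := s.2
  set q := (n - (s : ℕ) + (t : ℕ)) / n
  have h' : (n : ℂ) * q + ((t - s : Fin n) : ℕ) = n - (s : ℕ) + (t : ℕ) := by
    have := congrArg (Nat.cast (R := ℂ)) h
    rw [Nat.cast_add, Nat.cast_add, Nat.cast_sub hs.le, Nat.cast_mul] at this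
    exact this
  have h'' : (((t - s : Fin n) : ℕ) : ℂ) = n - (s : ℕ) + (t : ℕ) - n * q := by
    rw [← h']; ring
  refine ⟨(m : ℕ) * (1 - (q : ℤ)), ?_⟩
  push_cast
  rw [h'']
  field_simp
  ring

lemma chi_orth (n : ℕ) (m m' : Fin n) :
    ∑ t, chi n m' t * (starRingEnd ℂ) (chi n m t) = if m = m' then (n : ℂ) else 0 := by
  have hn : 0 < n := m.pos
  have hn' : (n : ℂ) ≠ 0 := by exact_mod_cast hn.ne'
  set z : ℂ := Complex.exp (Complex.I * (2 * Real.pi * (((m' : ℕ) : ℂ) - (m : ℕ)) / n)) with hz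
  have e : ∀ t : Fin n, chi n m' t * (starRingEnd ℂ) (chi n m t) = z ^ (t : ℕ) := by
    intro t
    unfold chi
    rw [← Complex.exp_conj, ← Complex.exp_add, hz, ← Complex.exp_nat_mul]
    congr 1
    rw [map_mul, Complex.conj_I, Complex.conj_ofReal]
    push_cast
    ring
  simp_rw [e]
  rw [Fin.sum_univ_eq_sum_range (fun t => z ^ t) n]
  split_ifs with h
  · have : z = 1 := by simp [hz, h]
    simp [this]
  · have hz1 : z ≠ 1 := by
      intro h1
      rw [hz, Complex.exp_eq_one_iff] at h1
      obtain ⟨q, hq⟩ := h1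
      have h2 : (((m' : ℕ) : ℂ) - (m : ℕ)) = n * q := by
        have hpi : (Real.pi : ℂ) ≠ 0 := by exact_mod_cast Real.pi_ne_zero
        have hI := Complex.I_ne_zero
        field_simp at hq
        linear_combination hq
      have h3 : ((m' : ℕ) : ℤ) - (m : ℕ) = n * q := by exact_mod_cast h2
      have a := m.2
      have b := m'.2
      apply h
      ext
      have hq0 : q = 0 := by
        by_contra hq0
        rcases lt_or_gt_of_ne hq0 with hq1 | hq1 <;> nlinarith
      rw [hq0] at h3
      omega
    have hzn : z ^ n = 1 := by
      rw [hz, ← Complex.exp_nat_mul, Complex.exp_eq_one_iff]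
      refine ⟨(m' : ℕ) - (m : ℕ), ?_⟩
      push_cast
      field_simp
    have := geom_sum_mul z n
    rw [hzn, sub_self] at this
    exact (mul_eq_zero.1 this).resolve_right (sub_ne_zero.2 hz1)

lemma sum_box (n k : ℕ) (hk : k ≤ n) (m : Fin n) :
    ∑ s : Fin n, (if (s : ℕ) < k then 1 / (k : ℂ) else 0) *
      Complex.exp (Complex.I * ((-(2 * Real.pi * ((m : ℕ) / (n : ℝ))) : ℝ) : ℂ)) ^ (s : ℕ)
      = symD k (2 * Real.pi * ((m : ℕ) / (n : ℝ))) := by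
  rw [Fin.sum_univ_eq_sum_range (fun s => (if s < k then 1 / (k : ℂ) else 0) *
      Complex.exp (Complex.I * ((-(2 * Real.pi * ((m : ℕ) / (n : ℝ))) : ℝ) : ℂ)) ^ s) n]
  unfold symD
  rw [Finset.mul_sum]
  symm
  apply Finset.sum_subset_zero_on_sdiff (Finset.range_subset_range.2 hk)
  · intro x hx
    simp at hx
    simp [hx.2]
  · intro x hx
    simp at hx
    simp [hx]

/-- characters on the product -/
noncomputable def chid (n d : ℕ) (m t : Fin d → Fin n) : ℂ := ∏ l, chi n (m l) (t l)

lemma boxC_eq (n k d : ℕ) (t : Fin d → Fin n) :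
    boxC n k d t = ∏ l, (if (t l : ℕ) < k then 1 / (k : ℂ) else 0) := by
  unfold boxC
  split_ifs with h
  · simp [h]
  · push Not at h
    obtain ⟨l, hl⟩ := h
    symm
    exact Finset.prod_eq_zero (Finset.mem_univ l) (by simp [hl])

lemma cconv_chid (n k d : ℕ) (hk : k ≤ n) (m t : Fin d → Fin n) :
    cconv n d (boxC n k d) (chid n d m) t =
      (∏ l, symD k (2 * Real.pi * ((m l : ℕ) / (n : ℝ)))) * chid n d m t := by
  unfold cconv
  simp_rw [← sum_box n k hk, boxC_eq, chid, chi_sub]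
  rw [Finset.prod_univ_sum, Finset.sum_mul, Fintype.piFinset_univ]
  refine Finset.sum_congr rfl fun s _ => ?_
  simp_rw [← Finset.prod_mul_distrib]
  refine Finset.prod_congr rfl fun l _ => ?_
  ring

lemma chid_orth (n d : ℕ) (m m' : Fin d → Fin n) :
    ∑ t, chid n d m' t * (starRingEnd ℂ) (chid n d m t) = if m = m' then (n : ℂ) ^ d else 0 := by
  simp_rw [chid, map_prod, ← Finset.prod_mul_distrib]
  have := Finset.prod_univ_sum (fun _ : Fin d => (Finset.univ : Finset (Fin n)))
    (fun l t => chi n (m' l) t * (starRingEnd ℂ) (chi n (m l) t))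
  rw [Fintype.piFinset_univ] at this
  rw [← this]
  simp_rw [chi_orth]
  split_ifs with h
  · simp [h]
  · obtain ⟨l, hl⟩ := Function.ne_iff.1 h
    exact Finset.prod_eq_zero (Finset.mem_univ l) (by simp [hl])

/-- normalized characters -/
noncomputable def vch (n d : ℕ) (m : Fin d → Fin n) : EuclideanSpace ℂ (Fin d → Fin n) :=
  (((Real.sqrt ((n : ℝ) ^ d))⁻¹ : ℝ) : ℂ) • WithLp.toLp 2 (chid n d m)

lemma vch_apply (n d : ℕ) (m t : Fin d → Fin n) :
    vch n d m t = (((Real.sqrt ((n : ℝ) ^ d))⁻¹ : ℝ) : ℂ) * chid n d m t := by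
  simp [vch]

lemma vch_orth (n d : ℕ) (hn : 0 < n) (m m' : Fin d → Fin n) :
    ∑ t, vch n d m' t * (starRingEnd ℂ) (vch n d m t) = if m = m' then 1 else 0 := by
  have h : ∀ t, vch n d m' t * (starRingEnd ℂ) (vch n d m t)
      = (((n : ℂ) ^ d)⁻¹) * (chid n d m' t * (starRingEnd ℂ) (chid n d m t)) := by
    intro t
    rw [vch_apply, vch_apply, map_mul, Complex.conj_ofReal]
    have : (((Real.sqrt ((n : ℝ) ^ d))⁻¹ : ℝ) : ℂ) * (((Real.sqrt ((n : ℝ) ^ d))⁻¹ : ℝ) : ℂ)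
        = ((n : ℂ) ^ d)⁻¹ := by
      rw [← Complex.ofReal_mul, ← mul_inv, Real.mul_self_sqrt (by positivity)]
      push_cast; rfl
    rw [← this]; ring
  simp_rw [h]
  rw [← Finset.mul_sum, chid_orth]
  have : (n : ℂ) ^ d ≠ 0 := pow_ne_zero _ (by exact_mod_cast hn.ne')
  split_ifs <;> simp [this]

lemma vch_orthonormal (n d : ℕ) (hn : 0 < n) : Orthonormal ℂ (vch n d) := by
  rw [orthonormal_iff_ite]
  intro m m'
  rw [PiLp.inner_apply]
  simpa using vch_orth n d hn m m'

/-- Fourier basis -/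
noncomputable def fbasis (n d : ℕ) (hn : 0 < n) :
    OrthonormalBasis (Fin d → Fin n) ℂ (EuclideanSpace ℂ (Fin d → Fin n)) :=
  OrthonormalBasis.mk (vch_orthonormal n d hn) (by
    rw [(vch_orthonormal n d hn).linearIndependent.span_eq_top_of_card_eq_finrank' (by simp)])

lemma fbasis_apply (n d : ℕ) (hn : 0 < n) (m : Fin d → Fin n) :
    fbasis n d hn m = vch n d m := by simp [fbasis]

lemma cconv_vch (n k d : ℕ) (hk : k ≤ n) (m t : Fin d → Fin n) :
    cconv n d (boxC n k d) (vch n d m) t =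
      (∏ l, symD k (2 * Real.pi * ((m l : ℕ) / (n : ℝ)))) * vch n d m t := by
  have := cconv_chid n k d hk m t
  rw [vch_apply, mul_left_comm, ← this]
  unfold cconv
  rw [Finset.mul_sum]
  refine Finset.sum_congr rfl fun s _ => ?_
  rw [vch_apply]; ring

lemma eigen (d : ℕ) (k : Fin (d + 1) → ℕ) (n : ℕ) (hn : 0 < n) (hkn : ∀ j, k j ≤ n)
    (T : EuclideanSpace ℂ (Fin d → Fin n) →ₗ[ℂ]
      EuclideanSpace ℂ (Fin (d + 1) × (Fin d → Fin n)))
    (hT : ∀ (u : EuclideanSpace ℂ (Fin d → Fin n))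
      (p : Fin (d + 1) × (Fin d → Fin n)),
      T u p = cconv n d (boxC n (k p.1) d) u p.2) (m : Fin d → Fin n) :
    (LinearMap.adjoint T ∘ₗ T) (fbasis n d hn m) =
      ((symF d k (fun l => 2 * Real.pi * ((m l : ℕ) / (n : ℝ))) : ℝ) : ℂ) • fbasis n d hn m := by
  refine InnerProductSpace.ext_inner_left_basis (𝕜 := ℂ) (fbasis n d hn).toBasis fun m' => ?_
  rw [OrthonormalBasis.coe_toBasis, LinearMap.comp_apply, LinearMap.adjoint_inner_right,
    inner_smul_right, orthonormal_iff_ite.1 (fbasis n d hn).orthonormal, PiLp.inner_apply,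
    Fintype.sum_prod_type]
  simp_rw [hT, fbasis_apply, cconv_vch _ _ _ (hkn _)]
  have : ∀ j : Fin (d+1), ∑ t, inner ℂ ((∏ l, symD (k j) (2 * Real.pi * ((m' l : ℕ) / (n : ℝ)))) * vch n d m' t)
      ((∏ l, symD (k j) (2 * Real.pi * ((m l : ℕ) / (n : ℝ)))) * vch n d m t)
      = ((∏ l, symD (k j) (2 * Real.pi * ((m l : ℕ) / (n : ℝ)))) *
        (starRingEnd ℂ) (∏ l, symD (k j) (2 * Real.pi * ((m' l : ℕ) / (n : ℝ)))))
        * if m' = m then 1 else 0 := by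
    intro j
    rw [← vch_orth n d hn, Finset.mul_sum]
    refine Finset.sum_congr rfl fun t _ => ?_
    rw [RCLike.inner_apply, map_mul]
    ring
  simp_rw [this]
  split_ifs with h
  · subst h
    unfold symF
    push_cast
    simp only [mul_one]
    refine Finset.sum_congr rfl fun j _ => ?_
    rw [Complex.mul_conj', norm_prod]
    push_cast
    rw [Finset.prod_pow]
  · simp

lemma diag_inv {ι V : Type*} [Fintype ι] [DecidableEq ι] [NormedAddCommGroup V]
    [InnerProductSpace ℂ V] (b : OrthonormalBasis ι ℂ V) (S : Module.End ℂ V) (c : ι → ℂ)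
    (hc : ∀ i, c i ≠ 0) (hS : ∀ i, S (b i) = c i • b i) :
    IsUnit S ∧ LinearMap.trace ℂ V (Ring.inverse S) = ∑ i, (c i)⁻¹ := by
  let R : Module.End ℂ V := b.toBasis.constr ℂ (fun i => (c i)⁻¹ • b i)
  have hR : ∀ i, R (b i) = (c i)⁻¹ • b i := by
    intro i
    have := b.toBasis.constr_basis ℂ (fun i => (c i)⁻¹ • b i) i
    simpa [R] using this
  have h1 : S * R = 1 := by
    refine b.toBasis.ext fun i => ?_
    simp [hR, hS, smul_smul, hc]
  have h2 : R * S = 1 := by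
    refine b.toBasis.ext fun i => ?_
    simp [hR, hS, smul_smul, hc]
  let U : (Module.End ℂ V)ˣ := ⟨S, R, h1, h2⟩
  refine ⟨⟨U, rfl⟩, ?_⟩
  have : Ring.inverse S = R := Ring.inverse_unit U
  rw [this, LinearMap.trace_eq_sum_inner R b]
  refine Finset.sum_congr rfl fun i _ => ?_
  rw [hR, inner_smul_right, orthonormal_iff_ite.1 b.orthonormal]
  simp

open MeasureTheory in
theorem stmt17 (d : ℕ) (hd : 0 < d) (k : Fin (d + 1) → ℕ) (hk2 : ∀ j, 2 ≤ k j)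
    (hcop : ∀ i j, i ≠ j → Nat.Coprime (k i) (k j))
    (T : ∀ n : ℕ, EuclideanSpace ℂ (Fin d → Fin n) →ₗ[ℂ]
      EuclideanSpace ℂ (Fin (d + 1) × (Fin d → Fin n)))
    (hT : ∀ (n : ℕ) (u : EuclideanSpace ℂ (Fin d → Fin n))
      (p : Fin (d + 1) × (Fin d → Fin n)),
      T n u p = cconv n d (boxC n (k p.1) d) u p.2) :
    (∀ n : ℕ, (∀ j, k j ≤ n) →
      IsUnit ((LinearMap.adjoint (T n) ∘ₗ T n :
        Module.End ℂ (EuclideanSpace ℂ (Fin d → Fin n))))) ∧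
    Filter.Tendsto
      (fun n : ℕ => LinearMap.trace ℂ (EuclideanSpace ℂ (Fin d → Fin n))
          (Ring.inverse (LinearMap.adjoint (T n) ∘ₗ T n)) / (n : ℂ) ^ d)
      Filter.atTop
      (nhds (((((2 * Real.pi) ^ d)⁻¹ *
        ∫ ω in Set.univ.pi fun _ : Fin d => Set.Icc (0 : ℝ) (2 * Real.pi),
          1 / fmulti d (d + 1) k ω ^ 2 : ℝ)) : ℂ)) := by
  have main : ∀ n : ℕ, (∀ j, k j ≤ n) → IsUnit ((LinearMap.adjoint (T n) ∘ₗ T n :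
        Module.End ℂ (EuclideanSpace ℂ (Fin d → Fin n)))) ∧
      LinearMap.trace ℂ (EuclideanSpace ℂ (Fin d → Fin n))
          (Ring.inverse (LinearMap.adjoint (T n) ∘ₗ T n)) =
        ∑ m : Fin d → Fin n,
          (((symF d k (fun l => 2 * Real.pi * ((m l : ℕ) / (n : ℝ))) : ℝ) : ℂ))⁻¹ := by
    intro n hn
    have hn0 : 0 < n := by have := hn 0; have := hk2 0; omega
    refine diag_inv (fbasis n d hn0) _ _ (fun m => ?_) (eigen d k n hn0 hn (T n) (hT n))
    exact_mod_cast (symF_pos d k hk2 hcop _).ne'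
  refine ⟨fun n hn => (main n hn).1, ?_⟩
  have hint : ∫ ω in Set.univ.pi fun _ : Fin d => Set.Icc (0 : ℝ) (2 * Real.pi),
          1 / fmulti d (d + 1) k ω ^ 2 =
      ∫ ω in Set.univ.pi fun _ : Fin d => Set.Icc (0 : ℝ) (2 * Real.pi), (symF d k ω)⁻¹ := by
    refine setIntegral_congr_fun (MeasurableSet.univ_pi fun _ => measurableSet_Icc) ?_
    intro ω hω
    simp only [fmulti_sq d k hk2 ω hω, one_div]
  rw [hint]
  have h := riemann_2pi d (fun ω => (symF d k ω)⁻¹)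
    ((symF_continuous d k).inv₀ fun ω => (symF_pos d k hk2 hcop ω).ne')
  have h' := (Complex.continuous_ofReal.tendsto _).comp h
  refine h'.congr' ?_
  filter_upwards [Filter.eventually_ge_atTop (∑ j, k j)] with n hn
  rw [(main n fun j => (Finset.single_le_sum (fun _ _ => Nat.zero_le _)
    (Finset.mem_univ j)).trans hn).2]
  simp
end

section
/- Let d be a positive integer, let k₁,…,k_{d+1} be pairwise coprime integers, each at least 2, and set k = min_j k_j. Define f : [0,2π]^d → ℝ by f(ω₁,…,ω_d) = (Σ_{j=1}^{d+1} Π_{ℓ=1}^{d} f_{k_j}(ω_ℓ)²)^{1/2}. Then (2π)^{−d} ∫_{[0,2π]^d} f(ω₁,…,ω_d)^{−2} dω₁⋯dω_d ≥ k^d/(d+1). -/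
open MeasureTheory

noncomputable def gF (k : ℕ) (x : ℝ) : ℝ :=
  (∑ m ∈ Finset.range k, ∑ n ∈ Finset.range k, Real.cos (((m:ℝ) - n) * x)) / (k:ℝ)^2

lemma gF_cont (k : ℕ) : Continuous (gF k) := by
  unfold gF
  fun_prop

lemma sumC (k : ℕ) (x : ℝ) : 2 * Real.sin (x/2) * ∑ n ∈ Finset.range k, Real.cos (n * x)
    = Real.sin (k * x - x/2) + Real.sin (x/2) := by
  induction k with
  | zero => simp [Real.sin_neg]
  | succ k ih =>
    rw [Finset.sum_range_succ, mul_add, ih]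
    have : ((k+1 : ℕ):ℝ) * x - x/2 = k * x + x/2 := by push_cast; ring
    rw [this, Real.sin_add, Real.sin_sub]; ring

lemma sumD (k : ℕ) (x : ℝ) : 2 * Real.sin (x/2) * ∑ n ∈ Finset.range k, Real.sin (n * x)
    = Real.cos (x/2) - Real.cos (k * x - x/2) := by
  induction k with
  | zero => simp [Real.cos_neg]
  | succ k ih =>
    rw [Finset.sum_range_succ, mul_add, ih]
    have : ((k+1 : ℕ):ℝ) * x - x/2 = k * x + x/2 := by push_cast; ring
    rw [this, Real.cos_add, Real.cos_sub]; ring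

lemma sumS (k : ℕ) (x : ℝ) :
    ∑ m ∈ Finset.range k, ∑ n ∈ Finset.range k, Real.cos (((m:ℝ) - n) * x)
    = (∑ n ∈ Finset.range k, Real.cos (n * x))^2 + (∑ n ∈ Finset.range k, Real.sin (n * x))^2 := by
  rw [sq, sq, Finset.sum_mul_sum, Finset.sum_mul_sum, ← Finset.sum_add_distrib]
  refine Finset.sum_congr rfl fun m _ => ?_
  rw [← Finset.sum_add_distrib]
  refine Finset.sum_congr rfl fun n _ => ?_
  rw [sub_mul, Real.cos_sub]

lemma sin_half_pos {x : ℝ} (hx : x ∈ Set.Icc 0 (2 * Real.pi)) (h : ¬ (x = 0 ∨ x = 2 * Real.pi)) :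
    0 < Real.sin (x/2) := by
  push Not at h
  have h1 := lt_of_le_of_ne hx.1 (Ne.symm h.1)
  have h2 := lt_of_le_of_ne hx.2 h.2
  exact Real.sin_pos_of_pos_of_lt_pi (by linarith) (by linarith)

lemma psinc_sq_s19 (k : ℕ) (hk : 2 ≤ k) {x : ℝ} (hx : x ∈ Set.Icc 0 (2 * Real.pi)) :
    psinc k x ^ 2 = gF k x := by
  have hk0 : (k:ℝ) ≠ 0 := by positivity
  unfold psinc gF
  split_ifs with h
  · have : ∀ m n : ℕ, Real.cos (((m:ℝ) - n) * x) = 1 := by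
      intro m n
      rcases h with h | h
      · simp [h]
      · rw [h]
        have := Real.cos_int_mul_two_pi ((m:ℤ) - n)
        push_cast at this
        exact this
    simp only [this]
    simp
    field_simp
  · have hs := sin_half_pos hx h
    rw [div_pow, mul_pow, sumS]
    have hC := sumC k x
    have hD := sumD k x
    set C := ∑ n ∈ Finset.range k, Real.cos (n * x)
    set D := ∑ n ∈ Finset.range k, Real.sin (n * x)
    have key : Real.sin (x/2)^2 * (C^2 + D^2) = Real.sin (k*x/2)^2 := by
      have e1 : Real.sin (k*x/2)^2 = (1 - Real.cos (k*x))/2 := by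
        rw [Real.sin_sq_eq_half_sub]; ring_nf
      have e2 : Real.cos (k*x) = Real.cos (k*x - x/2) * Real.cos (x/2)
          - Real.sin (k*x - x/2) * Real.sin (x/2) := by
        rw [← Real.cos_add]; ring_nf
      have e3 := Real.sin_sq_add_cos_sq (k*x - x/2)
      have e4 := Real.sin_sq_add_cos_sq (x/2)
      have : 4 * (Real.sin (x/2)^2 * (C^2 + D^2)) =
        (2 * Real.sin (x/2) * C)^2 + (2 * Real.sin (x/2) * D)^2 := by ring
      rw [hC, hD] at this
      rw [e1, e2]
      nlinarith
    rw [← key]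
    field_simp

lemma int_gF (k : ℕ) (hk : 2 ≤ k) :
    ∫ x in Set.Icc 0 (2 * Real.pi), gF k x = 2 * Real.pi / k := by
  have hk0 : (k:ℝ) ≠ 0 := by positivity
  rw [integral_Icc_eq_integral_Ioc, ← intervalIntegral.integral_of_le (by positivity)]
  unfold gF
  rw [intervalIntegral.integral_div, intervalIntegral.integral_finsetSum]
  swap
  · intro i _; exact Continuous.intervalIntegrable (by fun_prop) _ _
  have : ∀ m ∈ Finset.range k, ∫ x in (0:ℝ)..(2*Real.pi),
      ∑ n ∈ Finset.range k, Real.cos (((m:ℝ) - n) * x) = 2 * Real.pi := by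
    intro m hm
    rw [intervalIntegral.integral_finsetSum]
    swap
    · intro i _; exact Continuous.intervalIntegrable (by fun_prop) _ _
    rw [Finset.sum_eq_single m]
    · simp
    · intro n _ hn
      have h0 : (m:ℝ) - n ≠ 0 := by
        rw [sub_ne_zero]; exact_mod_cast hn.symm
      rw [intervalIntegral.integral_comp_mul_left (fun y => Real.cos y) h0, integral_cos]
      have := Real.sin_int_mul_pi (2 * ((m:ℤ) - n))
      push_cast at this
      rw [show ((m:ℝ) - n) * (2 * Real.pi) = 2 * ((m:ℝ) - n) * Real.pi by ring, this]
      simp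
    · intro h; exact absurd hm h
  rw [Finset.sum_congr rfl this]
  simp
  field_simp

lemma no_common_zero (a b : ℕ) (ha : 2 ≤ a) (hb : 2 ≤ b) (hab : Nat.Coprime a b) {x : ℝ}
    (hx : x ∈ Set.Icc 0 (2 * Real.pi)) (h1 : psinc a x = 0) (h2 : psinc b x = 0) : False := by
  unfold psinc at h1 h2
  split_ifs at h1 h2 with h
  · exact one_ne_zero h1
  have hs := sin_half_pos hx h
  have ha0 : (a:ℝ) ≠ 0 := by positivity
  have hb0 : (b:ℝ) ≠ 0 := by positivity
  have h1' : Real.sin (a * x / 2) = 0 := by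
    rcases div_eq_zero_iff.1 h1 with h | h
    · exact h
    · exact absurd h (by positivity)
  have h2' : Real.sin (b * x / 2) = 0 := by
    rcases div_eq_zero_iff.1 h2 with h | h
    · exact h
    · exact absurd h (by positivity)
  obtain ⟨m, hm⟩ := Real.sin_eq_zero_iff.1 h1'
  obtain ⟨n, hn⟩ := Real.sin_eq_zero_iff.1 h2'
  have hbez := Nat.gcd_eq_gcd_ab a b
  rw [hab.gcd_eq_one] at hbez
  set u := Nat.gcdA a b
  set v := Nat.gcdB a b
  have hbez' : (1:ℝ) = a * u + b * v := by exact_mod_cast hbez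
  have : x / 2 = ((m * u + n * v : ℤ):ℝ) * Real.pi := by
    push_cast
    calc x/2 = (a * u + b * v) * (x/2) := by rw [← hbez']; ring
      _ = u * (a*x/2) + v * (b*x/2) := by ring
      _ = _ := by rw [← hm, ← hn]; ring
  rw [this, Real.sin_int_mul_pi] at hs
  exact lt_irrefl _ hs

theorem stmt19 (d : ℕ) (hd : 0 < d) (k : Fin (d + 1) → ℕ) (hk2 : ∀ j, 2 ≤ k j)
    (hcop : ∀ i j, i ≠ j → Nat.Coprime (k i) (k j))
    (kmin : ℕ) (hkmin : IsLeast (Set.range k) kmin) :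
    (kmin : ℝ) ^ d / (d + 1) ≤
      ((2 * Real.pi) ^ d)⁻¹ *
        ∫ ω in Set.univ.pi fun _ : Fin d => Set.Icc (0 : ℝ) (2 * Real.pi),
          1 / fmulti d (d + 1) k ω ^ 2 := by
  set Q : Set (Fin d → ℝ) := Set.univ.pi fun _ : Fin d => Set.Icc (0 : ℝ) (2 * Real.pi) with hQ
  have hQc : IsCompact Q := isCompact_univ_pi fun _ => isCompact_Icc
  have hQm : MeasurableSet Q := hQc.measurableSet
  set G : (Fin d → ℝ) → ℝ := fun ω => ∑ j, ∏ l, gF (k j) (ω l) with hG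
  have hGc : Continuous G := by
    refine continuous_finsetSum _ fun j _ => continuous_finsetProd _ fun l _ => ?_
    exact (gF_cont _).comp (continuous_apply l)
  have hfG : ∀ ω ∈ Q, fmulti d (d+1) k ω ^ 2 = G ω := by
    intro ω hω
    unfold fmulti
    rw [Real.sq_sqrt (Finset.sum_nonneg fun j _ => Finset.prod_nonneg fun l _ => sq_nonneg _)]
    refine Finset.sum_congr rfl fun j _ => Finset.prod_congr rfl fun l _ => ?_
    exact psinc_sq_s19 _ (hk2 j) (hω l trivial)
  have hpos : ∀ ω ∈ Q, 0 < G ω := by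
    intro ω hω
    have e : G ω = ∑ j, ∏ l, psinc (k j) (ω l) ^ 2 :=
      Finset.sum_congr rfl fun j _ => Finset.prod_congr rfl fun l _ =>
        (psinc_sq_s19 _ (hk2 j) (hω l trivial)).symm
    have hnn : ∀ j ∈ Finset.univ, 0 ≤ ∏ l, psinc (k j) (ω l) ^ 2 :=
      fun j _ => Finset.prod_nonneg fun l _ => sq_nonneg _
    rw [e]
    refine lt_of_le_of_ne (Finset.sum_nonneg hnn) fun h0 => ?_
    have hz := (Finset.sum_eq_zero_iff_of_nonneg hnn).1 h0.symm
    have : ∀ j, ∃ l, psinc (k j) (ω l) = 0 := by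
      intro j
      obtain ⟨l, _, hl⟩ := Finset.prod_eq_zero_iff.1 (hz j (Finset.mem_univ _))
      exact ⟨l, by simpa using hl⟩
    choose p hp using this
    obtain ⟨i, j, hij, hpp⟩ := Fintype.exists_ne_map_eq_of_card_lt p (by simp)
    exact no_common_zero _ _ (hk2 i) (hk2 j) (hcop i j hij) (hω (p i) trivial) (hp i)
      (by rw [hpp]; exact hp j)
  have hI : ∫ ω in Q, 1 / fmulti d (d + 1) k ω ^ 2 = ∫ ω in Q, 1 / G ω :=
    setIntegral_congr_fun hQm fun ω hω => by simp only [hfG ω hω]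
  have hint1 : IntegrableOn (fun ω => 1 / G ω) Q :=
    ContinuousOn.integrableOn_compact hQc
      (continuousOn_const.div hGc.continuousOn fun ω hω => (hpos ω hω).ne')
  have hintG : IntegrableOn G Q := hGc.continuousOn.integrableOn_compact hQc
  have hvol : (volume Q).toReal = (2 * Real.pi)^d := by
    rw [hQ, volume_pi_pi]
    simp [ENNReal.toReal_ofReal Real.pi_pos.le]
  have hA : ∫ ω in Q, G ω = ∑ j, (2 * Real.pi / k j)^d := by
    rw [hG, integral_finsetSum]
    · refine Finset.sum_congr rfl fun j _ => ?_
      rw [hQ, volume_pi, Measure.restrict_pi_pi, integral_fintype_prod_eq_prod (𝕜 := ℝ)]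
      simp [int_gF _ (hk2 j), div_pow]
    · intro j _
      refine ContinuousOn.integrableOn_compact hQc (Continuous.continuousOn ?_)
      exact continuous_finsetProd _ fun l _ => (gF_cont _).comp (continuous_apply l)
  obtain ⟨⟨j0, hj0⟩, hmin⟩ := hkmin
  have hK : 0 < (kmin:ℝ) := by
    have := hk2 j0
    rw [hj0] at this
    positivity
  set V := (2 * Real.pi)^d with hV
  have hVpos : 0 < V := by positivity
  have hAle : ∑ j, (2 * Real.pi / k j)^d ≤ V * ((d+1) / (kmin:ℝ)^d) := by
    calc ∑ j, (2 * Real.pi / k j)^d ≤ ∑ j : Fin (d+1), (2 * Real.pi / kmin)^d := by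
          refine Finset.sum_le_sum fun j _ => ?_
          have : (kmin:ℝ) ≤ k j := by exact_mod_cast hmin ⟨j, rfl⟩
          gcongr
      _ = _ := by simp [div_pow]; ring
  set c := (kmin:ℝ)^d / (d+1) with hc
  have hcpos : 0 < c := by positivity
  have hci : ((d+1) / (kmin:ℝ)^d) = c⁻¹ := by rw [hc, inv_div]
  rw [hci] at hAle
  have hlow : ∫ ω in Q, (2 * c - c^2 * G ω) ≤ ∫ ω in Q, 1 / G ω := by
    refine setIntegral_mono_on ?_ hint1 hQm ?_
    · exact ContinuousOn.integrableOn_compact hQc (Continuous.continuousOn (by fun_prop))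
    · intro ω hω
      have := hpos ω hω
      rw [le_div_iff₀ this]
      nlinarith [sq_nonneg (c * G ω - 1)]
  rw [integral_sub (continuousOn_const.integrableOn_compact hQc).integrable (hintG.const_mul _),
    integral_const_mul (c^2), hA, setIntegral_const, measureReal_def, hvol, smul_eq_mul] at hlow
  rw [hI]
  have h3 : c^2 * ∑ j, (2 * Real.pi / k j)^d ≤ c^2 * (V * c⁻¹) := by gcongr
  have h4 : c^2 * (V * c⁻¹) = c * V := by field_simp
  rw [inv_mul_eq_div, le_div_iff₀ hVpos]
  nlinarith
end
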